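/- arXiv:1712.08946 — 6 statements merged into one kernel-verified Lean document; each statement's English description precedes it below -/
import Mathlib

section
/- Let Π be a nonempty set of probability measures on a measurable space Ω with lower probability ℓ and upper probability u, and suppose ℓ is k-monotone for a fixed integer k ≥ 2. Let B be a measurable set with u(B) > 0. Then Dempster's conditional lower probability ℓ_D(·|B), given by ℓ_D(A|B) = 1 − u(Aᶜ∩B)/u(B), is again k-monotone: for all measurable sets A₁,…,A_k, ℓ_D(A₁∪⋯∪A_k | B) ≥ Σ_{∅≠I⊆{1,…,k}} (−1)^{|I|−1} ℓ_D(⋂_{i∈I} A_i | B). -/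
open MeasureTheory

variable {Ω : Type*} [MeasurableSpace Ω]

/-- Lower probability of a set of measures: `ℓ(A) = inf_{P ∈ 𝔓} P(A)`. -/
noncomputable def lowP (𝔓 : Set (Measure Ω)) (A : Set Ω) : ℝ :=
  ⨅ P : 𝔓, (P.1 A).toReal

/-- Upper probability of a set of measures: `u(A) = sup_{P ∈ 𝔓} P(A)`. -/
noncomputable def upP (𝔓 : Set (Measure Ω)) (A : Set Ω) : ℝ :=
  ⨆ P : 𝔓, (P.1 A).toReal

/-- Generalized Bayes conditional lower probability: `ℓ_GB(A|B) = inf_P P(A∩B)/P(B)`. -/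
noncomputable def lowGB (𝔓 : Set (Measure Ω)) (A B : Set Ω) : ℝ :=
  ⨅ P : 𝔓, (P.1 (A ∩ B)).toReal / (P.1 B).toReal

/-- Generalized Bayes conditional upper probability: `u_GB(A|B) = sup_P P(A∩B)/P(B)`. -/
noncomputable def upGB (𝔓 : Set (Measure Ω)) (A B : Set Ω) : ℝ :=
  ⨆ P : 𝔓, (P.1 (A ∩ B)).toReal / (P.1 B).toReal

/-- Dempster conditional upper probability: `u_D(A|B) = u(A∩B)/u(B)`. -/
noncomputable def upD (𝔓 : Set (Measure Ω)) (A B : Set Ω) : ℝ :=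
  upP 𝔓 (A ∩ B) / upP 𝔓 B

/-- Dempster conditional lower probability: `ℓ_D(A|B) = 1 - u_D(Aᶜ|B)`. -/
noncomputable def lowD (𝔓 : Set (Measure Ω)) (A B : Set Ω) : ℝ :=
  1 - upD 𝔓 Aᶜ B

/-- Geometric conditional lower probability: `ℓ_G(A|B) = ℓ(A∩B)/ℓ(B)`. -/
noncomputable def lowG (𝔓 : Set (Measure Ω)) (A B : Set Ω) : ℝ :=
  lowP 𝔓 (A ∩ B) / lowP 𝔓 B

/-- Geometric conditional upper probability: `u_G(A|B) = 1 - ℓ_G(Aᶜ|B)`. -/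
noncomputable def upG (𝔓 : Set (Measure Ω)) (A B : Set Ω) : ℝ :=
  1 - lowG 𝔓 Aᶜ B

/-- A set function `ν` is `k`-monotone (a Choquet capacity of order `k`) if for all
measurable `A₁, …, A_k`,
`ν(A₁ ∪ ⋯ ∪ A_k) ≥ ∑_{∅ ≠ I ⊆ {1,…,k}} (-1)^{|I|-1} ν(⋂_{i ∈ I} A_i)`. -/
def kMonotone (ν : Set Ω → ℝ) (k : ℕ) : Prop :=
  ∀ A : Fin k → Set Ω, (∀ i, MeasurableSet (A i)) →
    ∑ I ∈ (Finset.univ.powerset.erase (∅ : Finset (Fin k))),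
      (-1 : ℝ) ^ (I.card - 1) * ν (⋂ i ∈ I, A i) ≤ ν (⋃ i, A i)

/-!
Conjugacy `u(Cᶜ) = 1 - ℓ(C)`, applied to `C = A ∪ Bᶜ`, turns Dempster's rule into
`ℓ_D(A|B) = (1 - 1/u(B)) + ℓ(A ∪ Bᶜ)/u(B)`. Since `A ↦ A ∪ Bᶜ` commutes with nonempty unions and
intersections, `A ↦ ℓ(A ∪ Bᶜ)` inherits `k`-monotonicity; so does its rescaling by `1/u(B)`, and the
additive constant is harmless because the coefficients `(-1)^(|I|-1)` sum to `1`.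
-/

lemma sum_powerset_erase_empty_neg_one_pow_card_sub_one {R ι : Type*} [Ring R] [DecidableEq ι]
    {s : Finset ι} (hs : s.Nonempty) :
    ∑ I ∈ s.powerset.erase ∅, (-1 : R) ^ (I.card - 1) = 1 := by
  have sum_all : ∑ I ∈ s.powerset, (-1 : R) ^ I.card = 0 := by
    exact_mod_cast congrArg (Int.cast : ℤ → R)
      (Finset.sum_powerset_neg_one_pow_card_of_nonempty hs)
  have sign_flip : ∀ I ∈ s.powerset.erase ∅, (-1 : R) ^ (I.card - 1) = -(-1) ^ I.card := by
    intro I hI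
    have hcard : I.card ≠ 0 := Finset.card_ne_zero.mpr <|
      Finset.nonempty_iff_ne_empty.mpr (Finset.ne_of_mem_erase hI)
    rw [← mul_pow_sub_one hcard, neg_one_mul, neg_neg]
  rw [← Finset.add_sum_erase _ _ (Finset.empty_mem_powerset s), Finset.card_empty,
    pow_zero] at sum_all
  rw [Finset.sum_congr rfl sign_flip, Finset.sum_neg_distrib]
  exact (eq_neg_of_add_eq_zero_left sum_all).symm

namespace kMonotone

variable {ν μ : Set Ω → ℝ} {k : ℕ}

lemma congr (hν : kMonotone ν k) (h : ∀ A, MeasurableSet A → μ A = ν A) : kMonotone μ k := by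
  intro A hA
  have h_inter (I : Finset (Fin k)) : μ (⋂ i ∈ I, A i) = ν (⋂ i ∈ I, A i) :=
    h _ (I.measurableSet_biInter fun i _ => hA i)
  simpa only [h_inter, h _ (MeasurableSet.iUnion hA)] using hν A hA

lemma union_right [NeZero k] (hν : kMonotone ν k) {C : Set Ω} (hC : MeasurableSet C) :
    kMonotone (fun A => ν (A ∪ C)) k := by
  intro A hA
  simpa only [Set.iInter_union, Set.iUnion_union] using
    hν (fun i => A i ∪ C) fun i => (hA i).union hC

lemma const_mul (hν : kMonotone ν k) {c : ℝ} (hc : 0 ≤ c) : kMonotone (fun A => c * ν A) k := by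
  intro A hA
  simpa only [Finset.mul_sum, mul_left_comm] using mul_le_mul_of_nonneg_left (hν A hA) hc

lemma const_add [NeZero k] (hν : kMonotone ν k) (c : ℝ) : kMonotone (fun A => c + ν A) k := by
  intro A hA
  simpa only [mul_add, Finset.sum_add_distrib, ← Finset.sum_mul,
    sum_powerset_erase_empty_neg_one_pow_card_sub_one Finset.univ_nonempty, one_mul] using
    add_le_add_right (hν A hA) c

end kMonotone

section Dempster

variable {𝔓 : Set (Measure Ω)}

lemma upP_compl (hne : 𝔓.Nonempty) (hprob : ∀ P ∈ 𝔓, IsProbabilityMeasure P)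
    {C : Set Ω} (hC : MeasurableSet C) : upP 𝔓 Cᶜ = 1 - lowP 𝔓 C := by
  have : Nonempty 𝔓 := hne.to_subtype
  have compl_apply (P : 𝔓) : (P.1 Cᶜ).toReal = 1 - (P.1 C).toReal :=
    have := hprob P.1 P.2
    probReal_compl_eq_one_sub hC
  have bddBelow : BddBelow (Set.range fun P : 𝔓 => (P.1 C).toReal) :=
    ⟨0, Set.forall_mem_range.mpr fun _ => ENNReal.toReal_nonneg⟩
  calc upP 𝔓 Cᶜ = ⨆ P : 𝔓, (1 - (P.1 C).toReal) := iSup_congr compl_apply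
    _ = 1 - lowP 𝔓 C :=
      (Antitone.map_ciInf_of_continuousAt (f := fun x : ℝ => 1 - x) (by fun_prop)
        antitone_const_tsub bddBelow).symm

lemma lowD_eq_add_mul_lowP_union_compl (hne : 𝔓.Nonempty)
    (hprob : ∀ P ∈ 𝔓, IsProbabilityMeasure P)
    {A B : Set Ω} (hA : MeasurableSet A) (hB : MeasurableSet B) :
    lowD 𝔓 A B = (1 - (upP 𝔓 B)⁻¹) + (upP 𝔓 B)⁻¹ * lowP 𝔓 (A ∪ Bᶜ) := by
  have conjugate : upP 𝔓 (Aᶜ ∩ B) = 1 - lowP 𝔓 (A ∪ Bᶜ) := by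
    rw [← upP_compl hne hprob (hA.union hB.compl), Set.compl_union, compl_compl]
  rw [lowD, upD, conjugate]
  ring

end Dempster

/-- if the lower probability of a nonempty set of probability measures is
`k`-monotone (`k ≥ 2`) and `u(B) > 0`, then Dempster's conditional lower probability
`ℓ_D(·|B) = 1 - u(·ᶜ ∩ B)/u(B)` is again `k`-monotone. -/
theorem dempster_preserves_k_monotone
    (𝔓 : Set (Measure Ω)) (hne : 𝔓.Nonempty)
    (hprob : ∀ P ∈ 𝔓, IsProbabilityMeasure P)
    (k : ℕ) (hk : 2 ≤ k)
    (hmono : kMonotone (lowP 𝔓) k)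
    (B : Set Ω) (hB : MeasurableSet B) (huB : 0 < upP 𝔓 B) :
    kMonotone (fun A => lowD 𝔓 A B) k := by
  have : NeZero k := ⟨by lia⟩
  have shifted : kMonotone (fun A => lowP 𝔓 (A ∪ Bᶜ)) k := hmono.union_right hB.compl
  have rescaled := (shifted.const_mul (inv_nonneg.mpr huB.le)).const_add (1 - (upP 𝔓 B)⁻¹)
  exact rescaled.congr fun A hA => lowD_eq_add_mul_lowP_union_compl hne hprob hA hB
end

section
/- Let Π be a nonempty set of probability measures on a measurable space Ω with lower probability ℓ, and suppose ℓ is k-monotone for a fixed integer k ≥ 2. Let B be a measurable set with ℓ(B) > 0. Then the Geometric conditional lower probability ℓ_G(·|B), given by ℓ_G(A|B) = ℓ(A∩B)/ℓ(B), is again k-monotone: for all measurable sets A₁,…,A_k, ℓ_G(A₁∪⋯∪A_k | B) ≥ Σ_{∅≠I⊆{1,…,k}} (−1)^{|I|−1} ℓ_G(⋂_{i∈I} A_i | B). -/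
open MeasureTheory

variable {Ω : Type*} [MeasurableSpace Ω]

namespace kMonotone

variable {ν : Set Ω → ℝ} {k : ℕ}

theorem inter_right (hν : kMonotone ν k) {B : Set Ω} (hB : MeasurableSet B) :
    kMonotone (fun A => ν (A ∩ B)) k := by
  intro A hA
  have trace_iInter : ∀ I ∈ Finset.univ.powerset.erase (∅ : Finset (Fin k)),
      ⋂ i ∈ I, A i ∩ B = (⋂ i ∈ I, A i) ∩ B := fun I hI =>
    Set.biInter_inter (Finset.nonempty_iff_ne_empty.mpr (Finset.ne_of_mem_erase hI)) A B
  calc ∑ I ∈ Finset.univ.powerset.erase (∅ : Finset (Fin k)),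
        (-1 : ℝ) ^ (I.card - 1) * ν ((⋂ i ∈ I, A i) ∩ B)
      = ∑ I ∈ Finset.univ.powerset.erase (∅ : Finset (Fin k)),
        (-1 : ℝ) ^ (I.card - 1) * ν (⋂ i ∈ I, A i ∩ B) :=
        Finset.sum_congr rfl fun I hI => by rw [trace_iInter I hI]
    _ ≤ ν (⋃ i, A i ∩ B) := hν (fun i => A i ∩ B) fun i => (hA i).inter hB
    _ = ν ((⋃ i, A i) ∩ B) := by rw [Set.iUnion_inter]

theorem div_const (hν : kMonotone ν k) {c : ℝ} (hc : 0 ≤ c) :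
    kMonotone (fun A => ν A / c) k := by
  intro A hA
  simpa only [Finset.sum_div, mul_div_assoc] using div_le_div_of_nonneg_right (hν A hA) hc

end kMonotone

theorem geometric_preserves_k_monotone_general {ν : Set Ω → ℝ} {k : ℕ} (hν : kMonotone ν k)
    {B : Set Ω} (hB : MeasurableSet B) (hνB : 0 < ν B) :
    kMonotone (fun A => ν (A ∩ B) / ν B) k :=
  (hν.inter_right hB).div_const hνB.le

/-- if the lower probability of a nonempty set of probability measures is
`k`-monotone (`k ≥ 2`) and `ℓ(B) > 0`, then the Geometric conditional lower probability
`ℓ_G(·|B) = ℓ(· ∩ B)/ℓ(B)` is again `k`-monotone. -/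
theorem geometric_preserves_k_monotone
    (𝔓 : Set (Measure Ω)) (hne : 𝔓.Nonempty)
    (hprob : ∀ P ∈ 𝔓, IsProbabilityMeasure P)
    (k : ℕ) (hk : 2 ≤ k)
    (hmono : kMonotone (lowP 𝔓) k)
    (B : Set Ω) (hB : MeasurableSet B) (hlB : 0 < lowP 𝔓 B) :
    kMonotone (fun A => lowG 𝔓 A B) k :=
  geometric_preserves_k_monotone_general hmono hB hlB
end

section
/- (Equivalence of Simpson's paradox and aggregation sure loss.) Let K ≥ 1 be an integer, let p, q ∈ [0,1]^K satisfy q_k ≤ p_k for all k, and let Λ = {λ ∈ [0,1]^K : q_k ≤ λ_k ≤ p_k for all k}. Let V be a nonempty closed subset of the standard simplex S_K and u ∈ S_K. Then the following are equivalent: (i) sup_{λ∈Λ} λ·u < inf{λ·v : λ∈Λ, v∈V} or inf_{λ∈Λ} λ·u > sup{λ·v : λ∈Λ, v∈V} (u incurs sure loss on Λ relative to V); (ii) p·u < inf_{v∈V} q·v or q·u > sup_{v∈V} p·v ((u,v) induces Simpson's paradox in (p,q) for all v ∈ V). -/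
open Finset

/-- Euclidean dot product on `Fin K → ℝ`. -/
noncomputable def dotR {K : ℕ} (x y : Fin K → ℝ) : ℝ := ∑ k, x k * y k

/-- The convex hull `Λ` of vectors bounded coordinatewise between `q` and `p`. -/
def Lam {K : ℕ} (p q : Fin K → ℝ) : Set (Fin K → ℝ) :=
  {l | ∀ k, q k ≤ l k ∧ l k ≤ p k}

/-!
Pairing with a nonnegative vector is monotone, so over the order interval `Λ = [q, p]` the
functional `λ ↦ λ · v` is smallest at `λ = q` and largest at `λ = p`, whatever `v ≥ 0` is. Hence
every infimum over `Λ` may be taken at `q` and every supremum at `p`, and this turns each of the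
two sure-loss inequalities into the corresponding Simpson inequality.
-/

section MonotoneOnInterval

variable {α β γ : Type*} [Preorder α] {f : α → β → γ} {a b : α} {t : Set β}

theorem lowerBounds_image2_Icc [Preorder γ] (hab : a ≤ b)
    (hf : ∀ y ∈ t, MonotoneOn (f · y) (Set.Icc a b)) :
    lowerBounds (Set.image2 f (Set.Icc a b) t) = lowerBounds (f a '' t) := by
  have ha : a ∈ Set.Icc a b := Set.left_mem_Icc.2 hab
  refine Set.Subset.antisymm (lowerBounds_mono_set (Set.image_subset_image2_right ha)) ?_
  rintro c hc _ ⟨x, hx, y, hy, rfl⟩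
  exact (hc ⟨y, hy, rfl⟩).trans (hf y hy ha hx hx.1)

theorem upperBounds_image2_Icc [Preorder γ] (hab : a ≤ b)
    (hf : ∀ y ∈ t, MonotoneOn (f · y) (Set.Icc a b)) :
    upperBounds (Set.image2 f (Set.Icc a b) t) = upperBounds (f b '' t) := by
  have hb : b ∈ Set.Icc a b := Set.right_mem_Icc.2 hab
  refine Set.Subset.antisymm (upperBounds_mono_set (Set.image_subset_image2_right hb)) ?_
  rintro c hc _ ⟨x, hx, y, hy, rfl⟩
  exact (hf y hy hx hb hx.2).trans (hc ⟨y, hy, rfl⟩)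

theorem csInf_image2_Icc [ConditionallyCompleteLattice γ] (hab : a ≤ b)
    (hf : ∀ y ∈ t, MonotoneOn (f · y) (Set.Icc a b)) (ht : t.Nonempty)
    (hbdd : BddBelow (f a '' t)) :
    sInf (Set.image2 f (Set.Icc a b) t) = sInf (f a '' t) :=
  ((isGLB_congr (lowerBounds_image2_Icc hab hf)).2
    (isGLB_csInf (ht.image _) hbdd)).csInf_eq ((Set.nonempty_Icc.2 hab).image2 ht)

theorem csSup_image2_Icc [ConditionallyCompleteLattice γ] (hab : a ≤ b)
    (hf : ∀ y ∈ t, MonotoneOn (f · y) (Set.Icc a b)) (ht : t.Nonempty)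
    (hbdd : BddAbove (f b '' t)) :
    sSup (Set.image2 f (Set.Icc a b) t) = sSup (f b '' t) :=
  ((isLUB_congr (upperBounds_image2_Icc hab hf)).2
    (isLUB_csSup (ht.image _) hbdd)).csSup_eq ((Set.nonempty_Icc.2 hab).image2 ht)

end MonotoneOnInterval

section DotProduct

variable {K : ℕ}

theorem dotR_mono_left {v : Fin K → ℝ} (hv : 0 ≤ v) : Monotone (dotR · v) :=
  fun _ _ h => dotProduct_le_dotProduct_of_nonneg_right h hv

theorem continuous_dotR (l : Fin K → ℝ) : Continuous (dotR l) :=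
  continuous_const.dotProduct continuous_id

theorem isBounded_dotR_image (l : Fin K → ℝ) {V : Set (Fin K → ℝ)}
    (hV : Bornology.IsBounded V) : Bornology.IsBounded (dotR l '' V) :=
  (hV.isCompact_closure.image (continuous_dotR l)).isBounded.subset
    (Set.image_mono subset_closure)

theorem Lam_eq_Icc (p q : Fin K → ℝ) : Lam p q = Set.Icc q p :=
  Set.ext fun _ => forall_and

theorem setOf_dotR_eq_image2 (L V : Set (Fin K → ℝ)) :
    {x | ∃ l ∈ L, ∃ v ∈ V, x = dotR l v} = Set.image2 dotR L V := by
  simp only [Set.image2, eq_comm]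

theorem simpson_iff_aggregation_sure_loss_general {p q u : Fin K → ℝ} {V : Set (Fin K → ℝ)}
    (hqp : q ≤ p) (hVne : V.Nonempty) (hVbdd : Bornology.IsBounded V)
    (hV : ∀ v ∈ V, 0 ≤ v) (hu : 0 ≤ u) :
    (sSup ((fun l => dotR l u) '' Lam p q)
        < sInf {x | ∃ l ∈ Lam p q, ∃ v ∈ V, x = dotR l v} ∨
      sInf ((fun l => dotR l u) '' Lam p q)
        > sSup {x | ∃ l ∈ Lam p q, ∃ v ∈ V, x = dotR l v}) ↔
    (dotR p u < sInf ((fun v => dotR q v) '' V) ∨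
      dotR q u > sSup ((fun v => dotR p v) '' V)) := by
  have hmono_u : MonotoneOn (dotR · u) (Set.Icc q p) := (dotR_mono_left hu).monotoneOn _
  have hmono_V : ∀ v ∈ V, MonotoneOn (dotR · v) (Set.Icc q p) :=
    fun v hv => (dotR_mono_left (hV v hv)).monotoneOn _
  rw [setOf_dotR_eq_image2, Lam_eq_Icc, hmono_u.sSup_image_Icc hqp, hmono_u.sInf_image_Icc hqp,
    csInf_image2_Icc hqp hmono_V hVne (isBounded_dotR_image q hVbdd).bddBelow,
    csSup_image2_Icc hqp hmono_V hVne (isBounded_dotR_image p hVbdd).bddAbove]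

end DotProduct

/-- Equivalence of Simpson's paradox and aggregation sure loss:
for `p, q ∈ [0,1]^K` with `q ≤ p`, `Λ = {λ : q ≤ λ ≤ p}`, a nonempty closed set `V` of
desirable aggregation rules in the simplex and `u` in the simplex, `u` incurs sure loss
on `Λ` relative to `V` iff `(u, v)` induces Simpson's paradox in `(p, q)` for all `v ∈ V`. -/
theorem simpson_iff_aggregation_sure_loss
    (K : ℕ) (hK : 1 ≤ K) (p q : Fin K → ℝ)
    (hp : ∀ k, 0 ≤ p k ∧ p k ≤ 1) (hq : ∀ k, 0 ≤ q k ∧ q k ≤ 1)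
    (hqp : ∀ k, q k ≤ p k)
    (V : Set (Fin K → ℝ)) (hVne : V.Nonempty) (hVcl : IsClosed V)
    (hVsub : V ⊆ stdSimplex ℝ (Fin K))
    (u : Fin K → ℝ) (hu : u ∈ stdSimplex ℝ (Fin K)) :
    (sSup ((fun l => dotR l u) '' Lam p q)
        < sInf {x | ∃ l ∈ Lam p q, ∃ v ∈ V, x = dotR l v} ∨
      sInf ((fun l => dotR l u) '' Lam p q)
        > sSup {x | ∃ l ∈ Lam p q, ∃ v ∈ V, x = dotR l v}) ↔
    (dotR p u < sInf ((fun v => dotR q v) '' V) ∨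
      dotR q u > sSup ((fun v => dotR p v) '' V)) := by
  exact simpson_iff_aggregation_sure_loss_general hqp hVne
    ((bounded_stdSimplex (Fin K)).subset hVsub) (fun _ hv => (hVsub hv).1) hu.1
end

section
/- (ALUP models.) Let K ≥ 1 be an integer, let p, q ∈ [0,1]^K satisfy q_k ≤ p_k for all k, and let Π = {π ∈ S_K : q_k ≤ π_k ≤ p_k for all k} be nonempty, where S_K is the standard simplex. Let u, v ∈ S_K. If the aggregation scheme (u,v) induces Simpson's paradox in (p,q), i.e. p·u < q·v or q·u > p·v, then it incurs sure loss with respect to itself on Π: correspondingly, sup_{π∈Π} π·u < inf_{π∈Π} π·v or inf_{π∈Π} π·u > sup_{π∈Π} π·v. -/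
open Finset

theorem csSup_image_lt_csInf_image_of_monotone {α β : Type*} [Preorder α]
    [ConditionallyCompleteLattice β] {f g : α → β} (hf : Monotone f) (hg : Monotone g)
    {s : Set α} (hs : s.Nonempty) {a b : α} (ha : a ∈ lowerBounds s) (hb : b ∈ upperBounds s)
    (hlt : f b < g a) :
    sSup (f '' s) < sInf (g '' s) :=
  calc sSup (f '' s) ≤ f b := hf.csSup_image_le hs hb
    _ < g a := hlt
    _ ≤ sInf (g '' s) := hg.le_csInf_image hs ha

theorem monotone_dotProduct_of_nonneg_right {ι R : Type*} [Fintype ι] [Semiring R]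
    [PartialOrder R] [IsOrderedRing R] {w : ι → R} (hw : 0 ≤ w) :
    Monotone fun x : ι → R => x ⬝ᵥ w :=
  fun _ _ hxy => dotProduct_le_dotProduct_of_nonneg_right hxy hw

theorem simpson_implies_sure_loss_on_ALUP_general {ι : Type*} [Fintype ι] {p q u v : ι → ℝ}
    (hu : 0 ≤ u) (hv : 0 ≤ v) {S : Set (ι → ℝ)} (hS : S.Nonempty) (hSqp : S ⊆ Set.Icc q p)
    (hpq : p ⬝ᵥ u < q ⬝ᵥ v) :
    sSup ((fun π => π ⬝ᵥ u) '' S) < sInf ((fun π => π ⬝ᵥ v) '' S) :=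
  csSup_image_lt_csInf_image_of_monotone (monotone_dotProduct_of_nonneg_right hu)
    (monotone_dotProduct_of_nonneg_right hv) hS (fun _ hπ => (hSqp hπ).1)
    (fun _ hπ => (hSqp hπ).2) hpq

theorem dotR_eq_dotProduct {K : ℕ} (x y : Fin K → ℝ) : dotR x y = x ⬝ᵥ y := rfl

/-- ALUP models: if the aggregation scheme `(u, v)` induces Simpson's
paradox in `(p, q)`, then it incurs (correspondingly directed) sure loss with respect to
itself on the ALUP model `Π = {π ∈ S_K : q ≤ π ≤ p}`. -/
theorem simpson_implies_sure_loss_on_ALUP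
    (K : ℕ) (hK : 1 ≤ K) (p q : Fin K → ℝ)
    (hp : ∀ k, 0 ≤ p k ∧ p k ≤ 1) (hq : ∀ k, 0 ≤ q k ∧ q k ≤ 1)
    (hqp : ∀ k, q k ≤ p k)
    (hPine : ({π ∈ stdSimplex ℝ (Fin K) | ∀ k, q k ≤ π k ∧ π k ≤ p k}).Nonempty)
    (u v : Fin K → ℝ)
    (hu : u ∈ stdSimplex ℝ (Fin K)) (hv : v ∈ stdSimplex ℝ (Fin K)) :
    (dotR p u < dotR q v →
      sSup ((fun π => dotR π u) '' {π ∈ stdSimplex ℝ (Fin K) | ∀ k, q k ≤ π k ∧ π k ≤ p k})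
        < sInf ((fun π => dotR π v) '' {π ∈ stdSimplex ℝ (Fin K) | ∀ k, q k ≤ π k ∧ π k ≤ p k})) ∧
    (dotR q u > dotR p v →
      sInf ((fun π => dotR π u) '' {π ∈ stdSimplex ℝ (Fin K) | ∀ k, q k ≤ π k ∧ π k ≤ p k})
        > sSup ((fun π => dotR π v) '' {π ∈ stdSimplex ℝ (Fin K) | ∀ k, q k ≤ π k ∧ π k ≤ p k})) := by
  simp only [dotR_eq_dotProduct]
  have hbox : {π ∈ stdSimplex ℝ (Fin K) | ∀ k, q k ≤ π k ∧ π k ≤ p k} ⊆ Set.Icc q p :=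
    fun _ hπ => ⟨fun k => (hπ.2 k).1, fun k => (hπ.2 k).2⟩
  exact ⟨simpson_implies_sure_loss_on_ALUP_general hu.1 hv.1 hPine hbox,
    simpson_implies_sure_loss_on_ALUP_general hv.1 hu.1 hPine hbox⟩
end

section
/- (Generalized Bayes rule produces the widest intervals: Dempster part.) Let Π be a nonempty set of probability measures on a measurable space Ω, and let A, B be measurable sets with ℓ(B) > 0. Then ℓ_GB(A|B) ≤ ℓ_D(A|B) ≤ u_D(A|B) ≤ u_GB(A|B). -/
open MeasureTheory

variable {Ω : Type*} [MeasurableSpace Ω]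

/-!
Since `P(A ∩ B) ≤ u_GB(A|B) P(B) ≤ u_GB(A|B) u(B)` for every `P`, taking the supremum on the left
gives `u_D(A|B) ≤ u_GB(A|B)`. Both rules satisfy the conjugacy `ℓ(A|B) = 1 - u(Aᶜ|B)`, so the lower
bound is the upper bound for `Aᶜ`. The middle inequality is the subadditivity
`u(B) ≤ u(A ∩ B) + u(Aᶜ ∩ B)` divided by `u(B)`.
-/

open scoped NNReal ENNReal

theorem ciSup_div_ciSup_le_ciSup_div {ι : Sort*} {f g : ι → ℝ} (hf : ∀ i, 0 ≤ f i)
    (hg : ∀ i, 0 < g i) (hg_bdd : BddAbove (Set.range g))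
    (hfg_bdd : BddAbove (Set.range fun i ↦ f i / g i)) :
    (⨆ i, f i) / (⨆ i, g i) ≤ ⨆ i, f i / g i := by
  have sup_g_nonneg : 0 ≤ ⨆ i, g i := Real.iSup_nonneg fun i ↦ (hg i).le
  have sup_div_nonneg : 0 ≤ ⨆ i, f i / g i :=
    Real.iSup_nonneg fun i ↦ div_nonneg (hf i) (hg i).le
  refine div_le_of_le_mul₀ sup_g_nonneg sup_div_nonneg
    (Real.iSup_le (fun i ↦ ?_) (mul_nonneg sup_div_nonneg sup_g_nonneg))
  calc f i = f i / g i * g i := (div_mul_cancel₀ _ (hg i).ne').symm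
    _ ≤ (⨆ j, f j / g j) * ⨆ j, g j :=
      mul_le_mul (le_ciSup hfg_bdd i) (le_ciSup hg_bdd i) (hg i).le sup_div_nonneg

theorem const_sub_ciSup {ι : Sort*} [Nonempty ι] {f : ι → ℝ} (hf : BddAbove (Set.range f))
    (c : ℝ) : c - ⨆ i, f i = ⨅ i, c - f i :=
  Antitone.map_ciSup_of_continuousAt (f := fun x : ℝ ↦ c - x) (by fun_prop)
    (fun _ _ h ↦ sub_le_sub_left h c) hf

/-- The measures in `𝔓` have a common finite bound on the mass they give to `B`. This is what makes
the suprema `upP 𝔓 S`, `S ⊆ B`, meaningful: a supremum of an unbounded family of reals is `0`. -/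
def IsUniformlyFiniteOn (𝔓 : Set (Measure Ω)) (B : Set Ω) : Prop :=
  ∃ C : ℝ≥0, ∀ P ∈ 𝔓, P B ≤ C

section

variable {𝔓 : Set (Measure Ω)} {P : Measure Ω} {A B S T : Set Ω}

namespace IsUniformlyFiniteOn

theorem of_isProbabilityMeasure (hprob : ∀ P ∈ 𝔓, IsProbabilityMeasure P) (B : Set Ω) :
    IsUniformlyFiniteOn 𝔓 B :=
  ⟨1, fun P hP ↦ have := hprob P hP; prob_le_one⟩

theorem mono (hT : IsUniformlyFiniteOn 𝔓 T) (hST : S ⊆ T) : IsUniformlyFiniteOn 𝔓 S :=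
  hT.imp fun _ hC P hP ↦ (measure_mono hST).trans (hC P hP)

theorem measure_ne_top (hB : IsUniformlyFiniteOn 𝔓 B) (hP : P ∈ 𝔓) : P B ≠ ∞ :=
  let ⟨_, hC⟩ := hB
  ne_top_of_le_ne_top ENNReal.coe_ne_top (hC P hP)

theorem bddAbove_range_measureReal (hB : IsUniformlyFiniteOn 𝔓 B) :
    BddAbove (Set.range fun P : 𝔓 ↦ P.1.real B) := by
  obtain ⟨C, hC⟩ := hB
  refine ⟨C, ?_⟩
  rintro _ ⟨P, rfl⟩
  exact ENNReal.toReal_mono ENNReal.coe_ne_top (hC P P.2)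

theorem bddAbove_range_measureReal_inter_div (hB : IsUniformlyFiniteOn 𝔓 B) (A : Set Ω) :
    BddAbove (Set.range fun P : 𝔓 ↦ P.1.real (A ∩ B) / P.1.real B) := by
  refine ⟨1, ?_⟩
  rintro _ ⟨P, rfl⟩
  exact div_le_one_of_le₀ (measureReal_mono Set.inter_subset_right (hB.measure_ne_top P.2))
    measureReal_nonneg

theorem measureReal_pos (hB : IsUniformlyFiniteOn 𝔓 B) (hP : P ∈ 𝔓) (hPB : P B ≠ 0) :
    0 < P.real B :=
  ENNReal.toReal_pos hPB (hB.measure_ne_top hP)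

theorem measureReal_le_upP (hB : IsUniformlyFiniteOn 𝔓 B) (hP : P ∈ 𝔓) : P.real B ≤ upP 𝔓 B :=
  le_ciSup hB.bddAbove_range_measureReal (⟨P, hP⟩ : 𝔓)

end IsUniformlyFiniteOn

theorem measure_ne_zero_of_lowP_pos (hB : 0 < lowP 𝔓 B) (hP : P ∈ 𝔓) : P B ≠ 0 := by
  have bddBelow : BddBelow (Set.range fun P : 𝔓 ↦ P.1.real B) :=
    ⟨0, Set.forall_mem_range.2 fun _ ↦ measureReal_nonneg⟩
  have real_pos : 0 < P.real B := hB.trans_le (ciInf_le bddBelow (⟨P, hP⟩ : 𝔓))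
  exact (ENNReal.toReal_pos_iff.1 real_pos).1.ne'

theorem upP_pos (hne : 𝔓.Nonempty) (hfin : IsUniformlyFiniteOn 𝔓 B) (hB : ∀ P ∈ 𝔓, P B ≠ 0) :
    0 < upP 𝔓 B :=
  let ⟨P, hP⟩ := hne
  (hfin.measureReal_pos hP (hB P hP)).trans_le (hfin.measureReal_le_upP hP)

theorem upP_nonneg : 0 ≤ upP 𝔓 S :=
  Real.iSup_nonneg fun _ ↦ measureReal_nonneg

theorem upP_union_le (hS : IsUniformlyFiniteOn 𝔓 S) (hT : IsUniformlyFiniteOn 𝔓 T) :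
    upP 𝔓 (S ∪ T) ≤ upP 𝔓 S + upP 𝔓 T :=
  Real.iSup_le (fun P ↦ (measureReal_union_le S T).trans
    (add_le_add (hS.measureReal_le_upP P.2) (hT.measureReal_le_upP P.2)))
    (add_nonneg upP_nonneg upP_nonneg)

theorem lowD_le_upD (hne : 𝔓.Nonempty) (hfin : IsUniformlyFiniteOn 𝔓 B)
    (hB : ∀ P ∈ 𝔓, P B ≠ 0) : lowD 𝔓 A B ≤ upD 𝔓 A B := by
  have upP_B_le : upP 𝔓 B ≤ upP 𝔓 (A ∩ B) + upP 𝔓 (Aᶜ ∩ B) := by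
    simpa only [← Set.union_inter_distrib_right, Set.union_compl_self, Set.univ_inter] using
      upP_union_le (hfin.mono (Set.inter_subset_right (s := A)))
        (hfin.mono (Set.inter_subset_right (s := Aᶜ)))
  have one_le : 1 ≤ upD 𝔓 A B + upD 𝔓 Aᶜ B := by
    rwa [upD, upD, ← add_div, one_le_div (upP_pos hne hfin hB)]
  exact sub_le_iff_le_add.2 one_le

theorem upD_le_upGB (hfin : IsUniformlyFiniteOn 𝔓 B) (hB : ∀ P ∈ 𝔓, P B ≠ 0) :
    upD 𝔓 A B ≤ upGB 𝔓 A B :=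
  ciSup_div_ciSup_le_ciSup_div (fun _ ↦ measureReal_nonneg)
    (fun P ↦ hfin.measureReal_pos P.2 (hB P P.2)) hfin.bddAbove_range_measureReal
    (hfin.bddAbove_range_measureReal_inter_div A)

theorem measureReal_inter_div_eq_one_sub_compl (hA : MeasurableSet A) (hB : P B ≠ 0)
    (hB_top : P B ≠ ∞) : P.real (A ∩ B) / P.real B = 1 - P.real (Aᶜ ∩ B) / P.real B := by
  have real_ne_zero : P.real B ≠ 0 := (measureReal_ne_zero_iff hB_top).2 hB
  have split : P.real (A ∩ B) + P.real (Aᶜ ∩ B) = P.real B := by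
    simpa only [Set.sdiff_eq, Set.inter_comm B] using measureReal_inter_add_sdiff hA hB_top
  rw [eq_sub_iff_add_eq, ← add_div, split, div_self real_ne_zero]

theorem lowGB_eq_one_sub_upGB_compl (hne : 𝔓.Nonempty) (hfin : IsUniformlyFiniteOn 𝔓 B)
    (hB : ∀ P ∈ 𝔓, P B ≠ 0) (hA : MeasurableSet A) : lowGB 𝔓 A B = 1 - upGB 𝔓 Aᶜ B := by
  have : Nonempty 𝔓 := hne.to_subtype
  calc lowGB 𝔓 A B
      = ⨅ P : 𝔓, (1 - P.1.real (Aᶜ ∩ B) / P.1.real B) := iInf_congr fun P ↦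
        measureReal_inter_div_eq_one_sub_compl hA (hB P P.2) (hfin.measure_ne_top P.2)
    _ = 1 - upGB 𝔓 Aᶜ B :=
        (const_sub_ciSup (hfin.bddAbove_range_measureReal_inter_div Aᶜ) 1).symm

theorem lowGB_le_lowD (hne : 𝔓.Nonempty) (hfin : IsUniformlyFiniteOn 𝔓 B)
    (hB : ∀ P ∈ 𝔓, P B ≠ 0) (hA : MeasurableSet A) : lowGB 𝔓 A B ≤ lowD 𝔓 A B :=
  calc lowGB 𝔓 A B = 1 - upGB 𝔓 Aᶜ B := lowGB_eq_one_sub_upGB_compl hne hfin hB hA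
    _ ≤ 1 - upD 𝔓 Aᶜ B := sub_le_sub_left (upD_le_upGB hfin hB) 1

end

theorem genBayes_widest_dempster_general {𝔓 : Set (Measure Ω)} {A B : Set Ω} (hne : 𝔓.Nonempty)
    (hfin : IsUniformlyFiniteOn 𝔓 B) (hB : ∀ P ∈ 𝔓, P B ≠ 0) (hA : MeasurableSet A) :
    lowGB 𝔓 A B ≤ lowD 𝔓 A B ∧ lowD 𝔓 A B ≤ upD 𝔓 A B ∧ upD 𝔓 A B ≤ upGB 𝔓 A B :=
  ⟨lowGB_le_lowD hne hfin hB hA, lowD_le_upD hne hfin hB, upD_le_upGB hfin hB⟩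

/-- widest intervals, Dempster part:
`ℓ_GB(A|B) ≤ ℓ_D(A|B) ≤ u_D(A|B) ≤ u_GB(A|B)` whenever `ℓ(B) > 0`. -/
theorem genBayes_widest_dempster
    (𝔓 : Set (Measure Ω)) (hne : 𝔓.Nonempty)
    (hprob : ∀ P ∈ 𝔓, IsProbabilityMeasure P)
    (A B : Set Ω) (hA : MeasurableSet A) (hB : MeasurableSet B)
    (hlB : 0 < lowP 𝔓 B) :
    lowGB 𝔓 A B ≤ lowD 𝔓 A B ∧ lowD 𝔓 A B ≤ upD 𝔓 A B ∧ upD 𝔓 A B ≤ upGB 𝔓 A B := by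
  exact genBayes_widest_dempster_general hne (.of_isProbabilityMeasure hprob B)
    (fun _ ↦ measure_ne_zero_of_lowP_pos hlB) hA
end

section
/- (Generalized Bayes rule produces the widest intervals: Geometric part.) Let Π be a nonempty set of probability measures on a measurable space Ω, and let A, B be measurable sets with ℓ(B) > 0. Then ℓ_GB(A|B) ≤ ℓ_G(A|B) ≤ u_G(A|B) ≤ u_GB(A|B). -/
open MeasureTheory

variable {Ω : Type*} [MeasurableSpace Ω]

/-!
For every `P ∈ 𝔓`, `ℓ_GB(A|B) ℓ(B) ≤ ℓ_GB(A|B) P(B) ≤ P(A ∩ B)`; the infimum over `P` gives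
`ℓ_GB ≤ ℓ_G`. Both rules are conjugate, `u(A|B) = 1 - ℓ(Aᶜ|B)`, so the same bound for `Aᶜ` gives
`u_G ≤ u_GB`. The middle inequality is superadditivity of the lower probability.
-/

section

variable {𝔓 : Set (Measure Ω)} {P : Measure Ω} {A B : Set Ω}

theorem bddBelow_range_real (𝔓 : Set (Measure Ω)) (A : Set Ω) :
    BddBelow (Set.range fun P : 𝔓 => P.1.real A) :=
  ⟨0, Set.forall_mem_range.2 fun _ => measureReal_nonneg⟩

theorem bddBelow_range_real_inter_div (𝔓 : Set (Measure Ω)) (A B : Set Ω) :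
    BddBelow (Set.range fun P : 𝔓 => P.1.real (A ∩ B) / P.1.real B) :=
  ⟨0, Set.forall_mem_range.2 fun _ => div_nonneg measureReal_nonneg measureReal_nonneg⟩

theorem lowP_le (hP : P ∈ 𝔓) (A : Set Ω) : lowP 𝔓 A ≤ P.real A :=
  ciInf_le (bddBelow_range_real 𝔓 A) ⟨P, hP⟩

theorem lowGB_le (hP : P ∈ 𝔓) (A B : Set Ω) : lowGB 𝔓 A B ≤ P.real (A ∩ B) / P.real B :=
  ciInf_le (bddBelow_range_real_inter_div 𝔓 A B) ⟨P, hP⟩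

theorem lowGB_nonneg (𝔓 : Set (Measure Ω)) (A B : Set Ω) : 0 ≤ lowGB 𝔓 A B :=
  Real.iInf_nonneg fun _ => div_nonneg measureReal_nonneg measureReal_nonneg

theorem measureReal_pos_of_lowP_pos (hlB : 0 < lowP 𝔓 B) (hP : P ∈ 𝔓) : 0 < P.real B :=
  hlB.trans_le (lowP_le hP B)

theorem measureReal_inter_add_compl_inter (hA : MeasurableSet A) (hB : P B ≠ ⊤) :
    P.real (A ∩ B) + P.real (Aᶜ ∩ B) = P.real B := by
  rw [Set.inter_comm A, Set.inter_comm Aᶜ, ← Set.sdiff_eq, measureReal_inter_add_sdiff hA hB]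

theorem measureReal_inter_div_add_compl_inter_div (hA : MeasurableSet A) (hB : P.real B ≠ 0) :
    P.real (A ∩ B) / P.real B + P.real (Aᶜ ∩ B) / P.real B = 1 := by
  have hB_ne_top : P B ≠ ⊤ := (ENNReal.toReal_ne_zero.1 hB).2
  rw [← add_div, measureReal_inter_add_compl_inter hA hB_ne_top, div_self hB]

theorem lowP_inter_add_lowP_compl_inter_le (hne : 𝔓.Nonempty) (hA : MeasurableSet A)
    (hB : ∀ P ∈ 𝔓, P B ≠ ⊤) : lowP 𝔓 (A ∩ B) + lowP 𝔓 (Aᶜ ∩ B) ≤ lowP 𝔓 B := by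
  have : Nonempty 𝔓 := hne.to_subtype
  refine le_ciInf fun ⟨P, hP⟩ => ?_
  calc lowP 𝔓 (A ∩ B) + lowP 𝔓 (Aᶜ ∩ B)
      ≤ P.real (A ∩ B) + P.real (Aᶜ ∩ B) := add_le_add (lowP_le hP _) (lowP_le hP _)
    _ = P.real B := measureReal_inter_add_compl_inter hA (hB P hP)

theorem lowG_le_upG (hne : 𝔓.Nonempty) (hA : MeasurableSet A) (hlB : 0 < lowP 𝔓 B) :
    lowG 𝔓 A B ≤ upG 𝔓 A B := by
  have hB (P : Measure Ω) (hP : P ∈ 𝔓) : P B ≠ ⊤ :=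
    (ENNReal.toReal_pos_iff.1 (measureReal_pos_of_lowP_pos hlB hP)).2.ne
  rw [upG, le_sub_iff_add_le, lowG, lowG, ← add_div, div_le_one hlB]
  exact lowP_inter_add_lowP_compl_inter_le hne hA hB

theorem lowGB_le_lowG (hne : 𝔓.Nonempty) (A : Set Ω) (hlB : 0 < lowP 𝔓 B) :
    lowGB 𝔓 A B ≤ lowG 𝔓 A B := by
  have : Nonempty 𝔓 := hne.to_subtype
  rw [lowG, le_div_iff₀ hlB]
  refine le_ciInf fun ⟨P, hP⟩ => ?_
  calc lowGB 𝔓 A B * lowP 𝔓 B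
      ≤ lowGB 𝔓 A B * P.real B := mul_le_mul_of_nonneg_left (lowP_le hP B) (lowGB_nonneg 𝔓 A B)
    _ ≤ P.real (A ∩ B) :=
      (le_div_iff₀ (measureReal_pos_of_lowP_pos hlB hP)).1 (lowGB_le hP A B)

theorem upGB_eq_one_sub_lowGB_compl (hne : 𝔓.Nonempty) (hA : MeasurableSet A)
    (hB : ∀ P ∈ 𝔓, P.real B ≠ 0) : upGB 𝔓 A B = 1 - lowGB 𝔓 Aᶜ B := by
  have : Nonempty 𝔓 := hne.to_subtype
  calc upGB 𝔓 A B
      = ⨆ P : 𝔓, (1 - P.1.real (Aᶜ ∩ B) / P.1.real B) := iSup_congr fun P =>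
        eq_sub_of_add_eq (measureReal_inter_div_add_compl_inter_div hA (hB P P.2))
    _ = 1 - lowGB 𝔓 Aᶜ B :=
      ((OrderIso.subLeft (1 : ℝ)).map_ciInf (bddBelow_range_real_inter_div 𝔓 Aᶜ B)).symm

theorem upG_le_upGB (hne : 𝔓.Nonempty) (hA : MeasurableSet A) (hlB : 0 < lowP 𝔓 B) :
    upG 𝔓 A B ≤ upGB 𝔓 A B := by
  rw [upG, upGB_eq_one_sub_lowGB_compl hne hA fun P hP =>
    (measureReal_pos_of_lowP_pos hlB hP).ne']
  exact sub_le_sub_left (lowGB_le_lowG hne Aᶜ hlB) 1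

theorem genBayes_widest_geometric_general (hne : 𝔓.Nonempty) (hA : MeasurableSet A)
    (hlB : 0 < lowP 𝔓 B) :
    lowGB 𝔓 A B ≤ lowG 𝔓 A B ∧ lowG 𝔓 A B ≤ upG 𝔓 A B ∧ upG 𝔓 A B ≤ upGB 𝔓 A B :=
  ⟨lowGB_le_lowG hne A hlB, lowG_le_upG hne hA hlB, upG_le_upGB hne hA hlB⟩

end

/-- widest intervals, Geometric part:
`ℓ_GB(A|B) ≤ ℓ_G(A|B) ≤ u_G(A|B) ≤ u_GB(A|B)` whenever `ℓ(B) > 0`. -/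
theorem genBayes_widest_geometric
    (𝔓 : Set (Measure Ω)) (hne : 𝔓.Nonempty)
    (hprob : ∀ P ∈ 𝔓, IsProbabilityMeasure P)
    (A B : Set Ω) (hA : MeasurableSet A) (hB : MeasurableSet B)
    (hlB : 0 < lowP 𝔓 B) :
    lowGB 𝔓 A B ≤ lowG 𝔓 A B ∧ lowG 𝔓 A B ≤ upG 𝔓 A B ∧ upG 𝔓 A B ≤ upGB 𝔓 A B := by
  exact genBayes_widest_geometric_general hne hA hlB
end
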